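/- arXiv:1509.05149 — 3 statements merged into one kernel-verified Lean document; each statement's English description precedes it below -/
import Mathlib

section
/- Let λ > 0, β ∈ (−1,1), let ψ : (0,1) → [0,∞) be measurable with ∫₀¹ ψ(a)(1−a)^β da = 1 and ψ(a) → ψ₁ ∈ (0,∞) as a → 1⁻, and let ω ≥ 0. Then lim_{N→∞} N ∫₀¹ ( 1 − exp{ −ω N^{−2/(1+β)} λ (1+a)/(1−a)² } ) ψ(a)(1−a)^β da = k_β · ω^{(1+β)/2}, where k_β := ( (2λ)^{(1+β)/2} ψ₁ / (1+β) ) Γ( (1−β)/2 ). -/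
/-!
Put `t = N ^ (-1 / (1 + β))` and `c = ω λ`. The quantity in question is then
`t ^ (-(1 + β)) * ∫₀¹ (1 - exp (-c t² (1 + a) / (1 - a)²)) ψ(a) (1 - a) ^ β da`, and `t → 0⁺`.
Only a neighbourhood of `a = 1` contributes. Choose `δ` such that `ψ` is bounded on `(1 - δ, 1)`.

* On `(0, 1 - δ]` the bound `1 - exp (-y) ≤ y` and the normalisation of `ψ` show that the scaled
  integral is `O(t ^ (1 - β))`, which vanishes because `β < 1`.
* On `(1 - δ, 1)` the substitution `a = 1 - t x` absorbs the factor `t ^ (-(1 + β))` exactly and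
  leaves `∫ (1 - exp (-c (2 - t x) / x²)) ψ(1 - t x) x ^ β dx` over `(0, δ / t)`. Dominated
  convergence, with a multiple of `min 1 (2 c / x²) * x ^ β` as majorant, gives the limit
  `ψ₁ ∫₀^∞ (1 - exp (-2 c / x²)) x ^ β dx` (`tendsto_near`).
* This last integral is evaluated in `integral_one_sub_exp_mul_rpow`: integration by parts followed
  by `y = x ^ (-2)` reduces it to a Gamma integral.
-/

open MeasureTheory Set Filter Topology

lemma one_sub_exp_neg_mem {y : ℝ} (hy : 0 ≤ y) :
    0 ≤ 1 - Real.exp (-y) ∧ 1 - Real.exp (-y) ≤ min 1 y := by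
  have h1 : Real.exp (-y) ≤ 1 := Real.exp_le_one_iff.mpr (by linarith)
  have h2 := Real.one_sub_le_exp_neg y
  have h3 := Real.exp_pos (-y)
  exact ⟨by linarith, le_min (by linarith) (by linarith)⟩

/-- Integrability of the majorant: near `0` because `-1 < β`, at infinity because `β < 1`. -/
lemma integrableOn_min_mul_rpow {β : ℝ} (hβ : β ∈ Ioo (-1 : ℝ) 1) (k : ℝ) (hk : 0 < k) :
    IntegrableOn (fun x : ℝ => min 1 (k / x ^ 2) * x ^ β) (Ioi 0) := by
  have hm : AEStronglyMeasurable (fun x : ℝ => min 1 (k / x ^ 2) * x ^ β) volume :=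
    (by fun_prop : Measurable (fun x : ℝ => min 1 (k / x ^ 2) * x ^ β)).aestronglyMeasurable
  rw [← Ioc_union_Ioi_eq_Ioi (zero_le_one' ℝ)]
  refine IntegrableOn.union ?_ ?_
  · have h := (intervalIntegrable_iff_integrableOn_Ioc_of_le (zero_le_one' ℝ)).1
      (intervalIntegral.intervalIntegrable_rpow' (a := 0) (b := 1) hβ.1)
    refine Integrable.mono' h hm.restrict ?_
    filter_upwards [ae_restrict_mem measurableSet_Ioc] with x hx
    have hp : 0 ≤ x ^ β := Real.rpow_nonneg hx.1.le _
    have : 0 ≤ k / x ^ 2 := by positivity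
    rw [Real.norm_of_nonneg (by positivity)]
    exact mul_le_of_le_one_left hp (min_le_left _ _)
  · have h := (integrableOn_Ioi_rpow_of_lt (show β - 2 < -1 by linarith [hβ.2])
      one_pos).const_mul k
    refine Integrable.mono' h hm.restrict ?_
    filter_upwards [ae_restrict_mem measurableSet_Ioi] with x hx
    have hx0 : (0 : ℝ) < x := one_pos.trans hx
    have hp : 0 ≤ x ^ β := Real.rpow_nonneg hx0.le _
    have : 0 ≤ k / x ^ 2 := by positivity
    rw [Real.norm_of_nonneg (by positivity), Real.rpow_sub hx0, Real.rpow_two]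
    calc _ ≤ k / x ^ 2 * x ^ β := by gcongr; exact min_le_right _ _
      _ = _ := by ring

/-- Integration by parts with `u = 1 - exp (-k / x²)` and `v = x ^ (1 + β) / (1 + β)`; both boundary
terms vanish since `-1 < β < 1`. -/
lemma integral_one_sub_exp_mul_rpow {β : ℝ} (hβ : β ∈ Ioo (-1 : ℝ) 1) (k : ℝ) (hk : 0 < k) :
    ∫ x in Ioi (0 : ℝ), (1 - Real.exp (-(k / x ^ 2))) * x ^ β =
      k ^ ((1 + β) / 2) / (1 + β) * Real.Gamma ((1 - β) / 2) := by
  obtain ⟨hβ1, hβ2⟩ := hβ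
  have hb : 0 < 1 + β := by linarith
  have hg : 0 < (1 - β) / 2 := by linarith
  set g : ℝ → ℝ := fun y => y ^ ((1 - β) / 2 - 1) * Real.exp (-(k * y)) with hgdef
  -- The integrand left over by the integration by parts becomes a multiple of the Gamma
  -- integrand `g` after `y = x ^ (-2)`.
  have hcomp : ∀ x ∈ Ioi (0 : ℝ),
      -Real.exp (-(k / x ^ 2)) * (2 * k / x ^ 3) * (x ^ (1 + β) / (1 + β)) =
        (-k / (1 + β)) * ((|(-2 : ℝ)| * x ^ ((-2 : ℝ) - 1)) • g (x ^ (-2 : ℝ))) := by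
    intro x hx
    have hx0 : (0 : ℝ) < x := hx
    have e1 : x ^ ((-2 : ℝ) - 1) = 1 / x ^ 3 := by
      rw [show (-2 : ℝ) - 1 = -((3 : ℕ) : ℝ) by norm_num, Real.rpow_neg hx0.le,
        Real.rpow_natCast, one_div]
    have e2 : (x ^ (-2 : ℝ)) ^ ((1 - β) / 2 - 1) = x ^ (1 + β) := by
      rw [← Real.rpow_mul hx0.le]; congr 1; ring
    have e3 : x ^ (-2 : ℝ) = 1 / x ^ 2 := by
      rw [Real.rpow_neg hx0.le, Real.rpow_two, one_div]
    simp only [hgdef, smul_eq_mul]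
    rw [e2, e1, e3, abs_of_neg (by norm_num : (-2 : ℝ) < 0), mul_one_div]
    field_simp
  have hgint : IntegrableOn g (Ioi 0) := by
    have := integrableOn_rpow_mul_exp_neg_mul_rpow (p := 1) (s := (1 - β) / 2 - 1) (b := k)
      (by linarith) one_pos hk
    simpa [hgdef] using this
  have hu'v : IntegrableOn (fun x : ℝ =>
      -Real.exp (-(k / x ^ 2)) * (2 * k / x ^ 3) * (x ^ (1 + β) / (1 + β))) (Ioi 0) := by
    refine IntegrableOn.congr_fun ?_ (fun x hx => (hcomp x hx).symm) measurableSet_Ioi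
    exact ((integrableOn_Ioi_comp_rpow_iff g (by norm_num)).2 hgint).const_mul _
  have huv' : IntegrableOn (fun x : ℝ => (1 - Real.exp (-(k / x ^ 2))) * x ^ β) (Ioi 0) := by
    refine Integrable.mono' (integrableOn_min_mul_rpow ⟨hβ1, hβ2⟩ k hk)
      (by fun_prop : Measurable (fun x : ℝ =>
        (1 - Real.exp (-(k / x ^ 2))) * x ^ β)).aestronglyMeasurable ?_
    filter_upwards [ae_restrict_mem measurableSet_Ioi] with x hx
    have hp : 0 ≤ x ^ β := Real.rpow_nonneg (le_of_lt hx) _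
    have h := one_sub_exp_neg_mem (show 0 ≤ k / x ^ 2 by positivity)
    rw [Real.norm_of_nonneg (mul_nonneg h.1 hp)]
    gcongr
    exact h.2
  have hu : ∀ x ∈ Ioi (0 : ℝ), HasDerivAt (fun x : ℝ => 1 - Real.exp (-(k / x ^ 2)))
      (-Real.exp (-(k / x ^ 2)) * (2 * k / x ^ 3)) x := by
    intro x hx
    have hx0 : x ≠ 0 := ne_of_gt hx
    refine ((((hasDerivAt_const x k).div (hasDerivAt_pow 2 x)
      (pow_ne_zero 2 hx0)).neg.exp).const_sub 1).congr_deriv ?_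
    simp only [Pi.neg_apply, Pi.div_apply]
    norm_num
    field_simp
  have hv : ∀ x ∈ Ioi (0 : ℝ), HasDerivAt (fun x : ℝ => x ^ (1 + β) / (1 + β)) (x ^ β) x := by
    intro x hx
    refine ((Real.hasDerivAt_rpow_const (p := 1 + β) (Or.inl (ne_of_gt hx))).div_const
      (1 + β)).congr_deriv ?_
    rw [add_sub_cancel_left]
    field_simp
  have hmain := integral_Ioi_mul_deriv_eq_deriv_mul (a' := 0) (b' := 0) hu hv huv' hu'v ?_ ?_
  · rw [hmain, setIntegral_congr_fun measurableSet_Ioi hcomp, integral_const_mul,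
      integral_comp_rpow_Ioi g (by norm_num), hgdef,
      Real.integral_rpow_mul_exp_neg_mul_Ioi hg hk]
    have : k * (1 / k) ^ ((1 - β) / 2) = k ^ ((1 + β) / 2) := by
      rw [one_div, Real.inv_rpow hk.le, ← Real.rpow_neg hk.le]
      nth_rw 1 [← Real.rpow_one k]
      rw [← Real.rpow_add hk]; congr 1; ring
    rw [← this]; ring
  · have h0 : Tendsto (fun x : ℝ => x ^ (1 + β) / (1 + β)) (𝓝[>] 0) (𝓝 0) := by
      have := ((Real.continuousAt_rpow_const 0 (1 + β) (Or.inr hb.le)).tendsto.div_const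
        (1 + β)).mono_left (nhdsWithin_le_nhds (s := Ioi 0))
      simpa [Real.zero_rpow hb.ne'] using this
    refine squeeze_zero' ?_ ?_ h0 <;> filter_upwards [self_mem_nhdsWithin] with x hx <;>
      have h := one_sub_exp_neg_mem (show 0 ≤ k / x ^ 2 by positivity) <;>
      have hp : 0 ≤ x ^ (1 + β) / (1 + β) := div_nonneg (Real.rpow_nonneg (le_of_lt hx) _) hb.le
    · exact mul_nonneg h.1 hp
    · exact mul_le_of_le_one_left hp (h.2.trans (min_le_left _ _))
  · have h0 : Tendsto (fun x : ℝ => k / (1 + β) * x ^ (-(1 - β))) atTop (𝓝 0) := by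
      simpa using (tendsto_rpow_neg_atTop (show 0 < 1 - β by linarith)).const_mul (k / (1 + β))
    refine squeeze_zero' ?_ ?_ h0 <;> filter_upwards [eventually_gt_atTop 0] with x hx <;>
      have h := one_sub_exp_neg_mem (show 0 ≤ k / x ^ 2 by positivity) <;>
      have hp : 0 ≤ x ^ (1 + β) / (1 + β) := div_nonneg (Real.rpow_nonneg (le_of_lt hx) _) hb.le
    · exact mul_nonneg h.1 hp
    · have e : x ^ (-(1 - β)) = x ^ (1 + β) / x ^ 2 := by
        rw [← Real.rpow_two, ← Real.rpow_sub hx]; congr 1; ring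
      rw [e]
      calc _ ≤ k / x ^ 2 * (x ^ (1 + β) / (1 + β)) :=
            mul_le_mul_of_nonneg_right (h.2.trans (min_le_right _ _)) hp
        _ = _ := by ring

/-- Limit of the scaled integral over `(1 - δ, 1)`, written after the substitution `a = 1 - t x`;
the indicator records the range `x < δ / t`. -/
lemma tendsto_near {β c δ M ψ₁ : ℝ} (hβ : β ∈ Ioo (-1 : ℝ) 1) (hc : 0 < c) (hδ : 0 < δ)
    (hδ1 : δ < 1) {ψ : ℝ → ℝ} (hmeas : Measurable ψ)
    (hM : ∀ a ∈ Ioo (1 - δ) 1, |ψ a| ≤ M)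
    (hlim : Tendsto ψ (𝓝[Ioo (0 : ℝ) 1] 1) (𝓝 ψ₁)) :
    Tendsto (fun t : ℝ => ∫ x in Ioi (0 : ℝ), (Ioo 0 (δ / t)).indicator
        (fun x => (1 - Real.exp (-(c * (2 - t * x) / x ^ 2))) * ψ (1 - t * x) * x ^ β) x)
      (𝓝[>] 0)
      (𝓝 (ψ₁ * ((2 * c) ^ ((1 + β) / 2) / (1 + β) * Real.Gamma ((1 - β) / 2)))) := by
  rw [← integral_one_sub_exp_mul_rpow hβ (2 * c) (by positivity), ← integral_const_mul]
  have hM0 : 0 ≤ M := (abs_nonneg _).trans (hM (1 - δ / 2) ⟨by linarith, by linarith⟩)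
  refine tendsto_integral_filter_of_dominated_convergence
    (fun x => M * (min 1 (2 * c / x ^ 2) * x ^ β)) ?_ ?_
    ((integrableOn_min_mul_rpow hβ (2 * c) (by positivity)).const_mul M) ?_
  · refine Eventually.of_forall fun t => ?_
    refine (Measurable.indicator ?_ measurableSet_Ioo).aestronglyMeasurable
    fun_prop
  · filter_upwards [self_mem_nhdsWithin] with t (ht : 0 < t)
    filter_upwards [ae_restrict_mem measurableSet_Ioi] with x (hx : 0 < x)
    have hp : 0 ≤ x ^ β := Real.rpow_nonneg hx.le _
    have hq : 0 ≤ 2 * c / x ^ 2 := by positivity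
    by_cases hxm : x ∈ Ioo 0 (δ / t)
    · rw [indicator_of_mem hxm]
      have htx : t * x < δ := by
        have := (lt_div_iff₀ ht).1 hxm.2; linarith
      have htx0 : 0 < t * x := by positivity
      have h := one_sub_exp_neg_mem (show 0 ≤ c * (2 - t * x) / x ^ 2 by
        have : 0 ≤ 2 - t * x := by linarith
        positivity)
      have h2 : c * (2 - t * x) / x ^ 2 ≤ 2 * c / x ^ 2 := by
        refine div_le_div_of_nonneg_right ?_ (by positivity)
        nlinarith
      rw [norm_mul, norm_mul, Real.norm_of_nonneg h.1, Real.norm_of_nonneg hp, Real.norm_eq_abs]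
      calc _ ≤ min 1 (2 * c / x ^ 2) * M * x ^ β := by
            gcongr
            · exact h.2.trans (min_le_min le_rfl h2)
            · exact hM _ ⟨by linarith, by linarith⟩
        _ = _ := by ring
    · rw [indicator_of_notMem hxm, norm_zero]
      positivity
  · filter_upwards [ae_restrict_mem measurableSet_Ioi] with x (hx : 0 < x)
    have hid : Tendsto (fun t : ℝ => t * x) (𝓝[>] 0) (𝓝 0) := by
      have : Tendsto (fun t : ℝ => t * x) (𝓝 0) (𝓝 (0 * x)) := tendsto_id.mul_const x
      rw [zero_mul] at this
      exact this.mono_left nhdsWithin_le_nhds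
    have hsmall : ∀ᶠ t in 𝓝[>] (0 : ℝ), t * x < δ := hid.eventually (gt_mem_nhds hδ)
    have h1 : Tendsto (fun t : ℝ => 1 - t * x) (𝓝[>] 0) (𝓝[Ioo (0 : ℝ) 1] 1) := by
      refine tendsto_nhdsWithin_iff.2 ⟨by simpa using hid.const_sub 1, ?_⟩
      filter_upwards [hsmall, self_mem_nhdsWithin] with t ht (ht0 : 0 < t)
      have : 0 < t * x := by positivity
      exact ⟨by linarith, by linarith⟩
    have h2 : Tendsto (fun t : ℝ => 1 - Real.exp (-(c * (2 - t * x) / x ^ 2))) (𝓝[>] 0)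
        (𝓝 (1 - Real.exp (-(2 * c / x ^ 2)))) := by
      have := ((((hid.const_sub 2).const_mul c).div_const (x ^ 2)).neg.rexp).const_sub 1
      simpa [mul_comm c 2] using this
    have h3 := (h2.mul (hlim.comp h1)).mul_const (x ^ β)
    rw [show ψ₁ * ((1 - Real.exp (-(2 * c / x ^ 2))) * x ^ β) =
      (1 - Real.exp (-(2 * c / x ^ 2))) * ψ₁ * x ^ β by ring]
    refine h3.congr' ?_
    filter_upwards [hsmall, self_mem_nhdsWithin] with t ht (ht0 : 0 < t)
    rw [indicator_of_mem (show x ∈ Ioo 0 (δ / t) from ⟨hx, (lt_div_iff₀ ht0).2 (by linarith)⟩)]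
    rfl

lemma setIntegral_Ioo_rescale {δ t : ℝ} (hδ : 0 < δ) (ht : 0 < t) (F : ℝ → ℝ) :
    ∫ a in Ioo (1 - δ) 1, F a =
      t * ∫ x in Ioi (0 : ℝ), (Ioo 0 (δ / t)).indicator (fun x => F (1 - t * x)) x := by
  rw [setIntegral_indicator measurableSet_Ioo,
    inter_eq_self_of_subset_right (Ioo_subset_Ioi_self : Ioo 0 (δ / t) ⊆ Ioi 0),
    ← integral_Ioc_eq_integral_Ioo, ← integral_Ioc_eq_integral_Ioo,
    ← intervalIntegral.integral_of_le (by linarith),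
    ← intervalIntegral.integral_of_le (by positivity),
    intervalIntegral.integral_comp_sub_mul F ht.ne' 1, smul_eq_mul, mul_inv_cancel_left₀ ht.ne',
    mul_div_cancel₀ _ ht.ne', mul_zero, sub_zero]

/-- The limit with `N` replaced by a continuous scale `t → 0⁺`, where `N = t ^ (-(1 + β))`. -/
lemma tendsto_scaled {c β : ℝ} (hc : 0 < c) (hβ : β ∈ Ioo (-1 : ℝ) 1)
    {ψ : ℝ → ℝ} {ψ₁ : ℝ}
    (hmeas : Measurable ψ) (hnonneg : ∀ a ∈ Ioo (0 : ℝ) 1, 0 ≤ ψ a)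
    (hdens : ∫ a in Ioo (0 : ℝ) 1, ψ a * (1 - a) ^ β = 1)
    (hlim : Tendsto ψ (𝓝[Ioo (0 : ℝ) 1] 1) (𝓝 ψ₁)) :
    Tendsto (fun t : ℝ => t ^ (-(1 + β)) * ∫ a in Ioo (0 : ℝ) 1,
        (1 - Real.exp (-(c * t ^ 2 * (1 + a) / (1 - a) ^ 2))) * ψ a * (1 - a) ^ β)
      (𝓝[>] 0)
      (𝓝 (ψ₁ * ((2 * c) ^ ((1 + β) / 2) / (1 + β) * Real.Gamma ((1 - β) / 2)))) := by
  obtain ⟨δ, hδ, hδ1, hM⟩ : ∃ δ : ℝ, 0 < δ ∧ δ < 1 ∧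
      ∀ a ∈ Ioo (1 - δ) 1, |ψ a| ≤ |ψ₁| + 1 := by
    have h := hlim.abs.eventually (gt_mem_nhds (lt_add_one |ψ₁|))
    rw [eventually_nhdsWithin_iff, Metric.eventually_nhds_iff] at h
    obtain ⟨ε, hε, h⟩ := h
    refine ⟨min ε (1 / 2), by positivity, (min_le_right _ _).trans_lt (by norm_num), ?_⟩
    intro a ha
    have h1 := min_le_left ε (1 / 2)
    have h2 := min_le_right ε (1 / 2)
    refine (h ?_ ⟨by linarith [ha.1], ha.2⟩).le
    rw [Real.dist_eq, abs_lt]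
    constructor <;> linarith [ha.1, ha.2]
  -- A non-integrable function would have integral `0`, contradicting the normalisation.
  have hint : IntegrableOn (fun a => ψ a * (1 - a) ^ β) (Ioo 0 1) := by
    by_contra h
    rw [integral_undef h] at hdens
    exact zero_ne_one hdens
  set F : ℝ → ℝ → ℝ := fun t a =>
    (1 - Real.exp (-(c * t ^ 2 * (1 + a) / (1 - a) ^ 2))) * ψ a * (1 - a) ^ β with hF
  have hd : ∀ a ∈ Ioo (0 : ℝ) 1, 0 ≤ ψ a * (1 - a) ^ β := fun a ha =>
    mul_nonneg (hnonneg a ha) (Real.rpow_nonneg (by linarith [ha.2]) _)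
  have hexp : ∀ t, ∀ a ∈ Ioo (0 : ℝ) 1, 0 ≤ c * t ^ 2 * (1 + a) / (1 - a) ^ 2 := by
    intro t a ha
    have : 0 ≤ 1 + a := by linarith [ha.1]
    positivity
  have hF0 : ∀ t, ∀ a ∈ Ioo (0 : ℝ) 1, 0 ≤ F t a := by
    intro t a ha
    simp only [hF, mul_assoc]
    exact mul_nonneg (by simpa only [mul_assoc] using (one_sub_exp_neg_mem (hexp t a ha)).1)
      (hd a ha)
  have hFint : ∀ t, IntegrableOn (F t) (Ioo 0 1) := by
    intro t
    refine Integrable.mono' hint (by fun_prop : Measurable (F t)).aestronglyMeasurable ?_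
    filter_upwards [ae_restrict_mem measurableSet_Ioo] with a ha
    rw [Real.norm_of_nonneg (hF0 t a ha)]
    have h := (one_sub_exp_neg_mem (hexp t a ha)).2.trans (min_le_left _ _)
    calc F t a = (1 - Real.exp (-(c * t ^ 2 * (1 + a) / (1 - a) ^ 2))) *
          (ψ a * (1 - a) ^ β) := by rw [hF]; ring
      _ ≤ _ := mul_le_of_le_one_left (hd a ha) h
  have hsub1 : Ioc 0 (1 - δ) ⊆ Ioo (0 : ℝ) 1 := fun a ha => ⟨ha.1, by linarith [ha.2]⟩
  have hsub2 : Ioo (1 - δ) 1 ⊆ Ioo (0 : ℝ) 1 := fun a ha => ⟨by linarith [ha.1], ha.2⟩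
  have hsplit : ∀ t, ∫ a in Ioo (0 : ℝ) 1, F t a =
      (∫ a in Ioc 0 (1 - δ), F t a) + ∫ a in Ioo (1 - δ) 1, F t a := by
    intro t
    rw [← setIntegral_union (Set.disjoint_left.2 fun a h1 h2 => h1.2.not_gt h2.1)
      measurableSet_Ioo ((hFint t).mono_set hsub1) ((hFint t).mono_set hsub2),
      Ioc_union_Ioo_eq_Ioo (by linarith) (by linarith)]
  -- Away from `1` the integrand is `O(t ^ 2)`, so the scaled integral is `O(t ^ (1 - β))`.
  have hfar : Tendsto (fun t : ℝ => t ^ (-(1 + β)) * ∫ a in Ioc 0 (1 - δ), F t a)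
      (𝓝[>] 0) (𝓝 0) := by
    have h0 : Tendsto (fun t : ℝ => 2 * c / δ ^ 2 * t ^ (1 - β)) (𝓝[>] 0) (𝓝 0) := by
      have hb : 0 < 1 - β := by linarith [hβ.2]
      have := ((Real.continuousAt_rpow_const 0 (1 - β) (Or.inr hb.le)).tendsto.const_mul
        (2 * c / δ ^ 2)).mono_left (nhdsWithin_le_nhds (s := Ioi 0))
      simpa [Real.zero_rpow hb.ne'] using this
    refine squeeze_zero' ?_ ?_ h0 <;> filter_upwards [self_mem_nhdsWithin] with t (ht : 0 < t)
    · exact mul_nonneg (Real.rpow_nonneg ht.le _)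
        (setIntegral_nonneg measurableSet_Ioc fun a ha => hF0 t a (hsub1 ha))
    · have hle : ∫ a in Ioc 0 (1 - δ), F t a ≤ 2 * c / δ ^ 2 * t ^ 2 := by
        calc ∫ a in Ioc 0 (1 - δ), F t a
            ≤ ∫ a in Ioc 0 (1 - δ), 2 * c / δ ^ 2 * t ^ 2 * (ψ a * (1 - a) ^ β) := by
              refine setIntegral_mono_on ((hFint t).mono_set hsub1)
                ((hint.mono_set hsub1).const_mul _) measurableSet_Ioc fun a ha => ?_
              have ha' := hsub1 ha
              have h := (one_sub_exp_neg_mem (hexp t a ha')).2.trans (min_le_right _ _)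
              have h2 : c * t ^ 2 * (1 + a) / (1 - a) ^ 2 ≤ c * t ^ 2 * 2 / δ ^ 2 := by
                gcongr
                · linarith [ha'.2]
                · linarith [ha.2]
              calc F t a = (1 - Real.exp (-(c * t ^ 2 * (1 + a) / (1 - a) ^ 2))) *
                    (ψ a * (1 - a) ^ β) := by rw [hF]; ring
                _ ≤ c * t ^ 2 * 2 / δ ^ 2 * (ψ a * (1 - a) ^ β) :=
                    mul_le_mul_of_nonneg_right (h.trans h2) (hd a ha')
                _ = _ := by ring
          _ = 2 * c / δ ^ 2 * t ^ 2 * ∫ a in Ioc 0 (1 - δ), ψ a * (1 - a) ^ β :=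
              integral_const_mul _ _
          _ ≤ 2 * c / δ ^ 2 * t ^ 2 * 1 := by
              gcongr
              refine (setIntegral_mono_set hint ?_ hsub1.eventuallyLE).trans hdens.le
              filter_upwards [ae_restrict_mem measurableSet_Ioo] with a ha using hd a ha
          _ = _ := mul_one _
      have e : t ^ (1 - β) = t ^ (-(1 + β)) * t ^ 2 := by
        rw [← Real.rpow_two, ← Real.rpow_add ht]; congr 1; ring
      rw [e]
      calc _ ≤ t ^ (-(1 + β)) * (2 * c / δ ^ 2 * t ^ 2) :=
            mul_le_mul_of_nonneg_left hle (Real.rpow_nonneg ht.le _)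
        _ = _ := by ring
  have hnear := tendsto_near hβ hc hδ hδ1 hmeas hM hlim
  have hsum := hfar.add hnear
  rw [zero_add] at hsum
  refine hsum.congr' ?_
  filter_upwards [self_mem_nhdsWithin] with t (ht : 0 < t)
  change _ = t ^ (-(1 + β)) * ∫ a in Ioo (0 : ℝ) 1, F t a
  rw [hsplit t, mul_add, setIntegral_Ioo_rescale hδ ht (F t), ← mul_assoc]
  congr 1
  rw [← integral_const_mul]
  refine setIntegral_congr_fun measurableSet_Ioi fun x (hx : 0 < x) => ?_
  by_cases hxm : x ∈ Ioo 0 (δ / t)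
  · simp only [indicator_of_mem hxm, hF]
    have e1 : c * t ^ 2 * (1 + (1 - t * x)) / (1 - (1 - t * x)) ^ 2 =
        c * (2 - t * x) / x ^ 2 := by
      rw [sub_sub_cancel]; field_simp; ring
    have e2 : t ^ (-(1 + β)) * t * t ^ β = 1 := by
      nth_rw 2 [← Real.rpow_one t]
      rw [← Real.rpow_add ht, ← Real.rpow_add ht, show -(1 + β) + 1 + β = 0 by ring,
        Real.rpow_zero]
    rw [e1, sub_sub_cancel, Real.mul_rpow ht.le hx.le]
    linear_combination (-((1 - Real.exp (-(c * (2 - t * x) / x ^ 2))) * ψ (1 - t * x) * x ^ β)) * e2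
  · simp only [indicator_of_notMem hxm, mul_zero]

theorem stmt_15 (lam β : ℝ) (hlam : 0 < lam) (hβ : β ∈ Set.Ioo (-1 : ℝ) 1)
    (ψ : ℝ → ℝ) (ψ₁ : ℝ) (hψ₁ : 0 < ψ₁)
    (hmeas : Measurable ψ) (hnonneg : ∀ a ∈ Set.Ioo (0 : ℝ) 1, 0 ≤ ψ a)
    (hdens : ∫ a in Set.Ioo (0 : ℝ) 1, ψ a * (1 - a) ^ β = 1)
    (hlim : Filter.Tendsto ψ (nhdsWithin 1 (Set.Ioo (0 : ℝ) 1)) (nhds ψ₁))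
    (ω : ℝ) (hω : 0 ≤ ω) :
    Filter.Tendsto
      (fun N : ℕ =>
        (N : ℝ) *
          ∫ a in Set.Ioo (0 : ℝ) 1,
            (1 - Real.exp (-(ω * (N : ℝ) ^ (-(2 / (1 + β))) * lam * (1 + a) / (1 - a) ^ 2))) *
              ψ a * (1 - a) ^ β)
      Filter.atTop
      (nhds (((2 * lam) ^ ((1 + β) / 2) * ψ₁ / (1 + β) * Real.Gamma ((1 - β) / 2)) *
        ω ^ ((1 + β) / 2))) := by
  have hb : 0 < 1 + β := by linarith [hβ.1]
  rcases hω.eq_or_lt with rfl | hω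
  · simp [Real.zero_rpow (show (1 + β) / 2 ≠ 0 by positivity)]
  -- The scale `t = N ^ (-1 / (1 + β))` satisfies `t ^ (-(1 + β)) = N`.
  have hscale : Tendsto (fun N : ℕ => (N : ℝ) ^ (-(1 / (1 + β)))) atTop (𝓝[>] 0) := by
    refine tendsto_nhdsWithin_iff.2
      ⟨(tendsto_rpow_neg_atTop (by positivity)).comp tendsto_natCast_atTop_atTop, ?_⟩
    filter_upwards [eventually_gt_atTop 0] with N hN
    exact Real.rpow_pos_of_pos (Nat.cast_pos.2 hN) _
  have h := (tendsto_scaled (mul_pos hω hlam) hβ hmeas hnonneg hdens hlim).comp hscale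
  have hconst : ψ₁ * ((2 * (ω * lam)) ^ ((1 + β) / 2) / (1 + β) * Real.Gamma ((1 - β) / 2)) =
      ((2 * lam) ^ ((1 + β) / 2) * ψ₁ / (1 + β) * Real.Gamma ((1 - β) / 2)) *
        ω ^ ((1 + β) / 2) := by
    rw [show 2 * (ω * lam) = 2 * lam * ω by ring, Real.mul_rpow (by positivity) hω.le]
    ring
  rw [hconst] at h
  refine h.congr fun N => ?_
  have hN : (0 : ℝ) ≤ N := N.cast_nonneg
  have e1 : ((N : ℝ) ^ (-(1 / (1 + β)))) ^ (-(1 + β)) = N := by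
    rw [← Real.rpow_mul hN, show -(1 / (1 + β)) * -(1 + β) = 1 by field_simp, Real.rpow_one]
  have e2 : ((N : ℝ) ^ (-(1 / (1 + β)))) ^ 2 = (N : ℝ) ^ (-(2 / (1 + β))) := by
    rw [← Real.rpow_two, ← Real.rpow_mul hN]; congr 1; ring
  simp only [Function.comp_apply, e1, e2]
  congr 1
  refine integral_congr_ae (Eventually.of_forall fun a => ?_)
  simp only
  rw [mul_right_comm ω lam]
end

section
/- Let λ > 0, β ∈ (−1,1), and let ψ : (0,1) → [0,∞) be measurable with ∫₀¹ ψ(a)(1−a)^β da = 1 and ψ(a) → ψ₁ ∈ (0,∞) as a → 1⁻. Then lim_{x→∞} x^{(1+β)/2} ∫_{{a ∈ (0,1) : λ(1+a)/(1−a)² > x}} ψ(a)(1−a)^β da = ψ₁ (2λ)^{(1+β)/2} / (1+β). -/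
/-!
The map `a ↦ lam * (1 + a) / (1 - a) ^ 2` is increasing on `(0, 1)`, so for `x > lam` its
superlevel set is an interval `(1 - U x, 1)`, where `U x = 4 lam / (lam + √(lam² + 8 lam x))` is the
positive root of `x u² + lam u - 2 lam = 0` (`superlevel_eq`). Since `ψ` tends to `ψ₁` at `1⁻`,
the mass of `(1 - u, 1)` is asymptotic to
`ψ₁ ∫_{1-u}^1 (1 - a)^β da = ψ₁ u^(1+β) / (1 + β)` (`tendsto_mass`), and `√x * U x → √(2 lam)`
(`tendsto_sqrt_mul_threshold`) converts this into the stated asymptotics in `x`.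
-/

open Filter Topology MeasureTheory Set

/-- The positive root `u` of `x u² + lam u - 2 lam = 0`, in rationalised form. -/
noncomputable def threshold (lam x : ℝ) : ℝ := 4 * lam / (lam + √(lam ^ 2 + 8 * lam * x))

lemma threshold_pos {lam : ℝ} (hlam : 0 < lam) (x : ℝ) : 0 < threshold lam x := by
  unfold threshold; positivity

lemma superlevel_eq {lam x : ℝ} (hlam : 0 < lam) (hx : lam < x) :
    {a ∈ Ioo (0 : ℝ) 1 | x < lam * (1 + a) / (1 - a) ^ 2} = Ioo (1 - threshold lam x) 1 := by
  have hx0 : 0 < x := hlam.trans hx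
  have hs2 : √(lam ^ 2 + 8 * lam * x) ^ 2 = lam ^ 2 + 8 * lam * x :=
    Real.sq_sqrt (by positivity)
  have hs : 3 * lam < √(lam ^ 2 + 8 * lam * x) :=
    Real.lt_sqrt_of_sq_lt (by nlinarith)
  unfold threshold
  set s := √(lam ^ 2 + 8 * lam * x)
  have hsl : 0 < lam + s := by linarith
  have hU1 : 4 * lam / (lam + s) < 1 := by rw [div_lt_one hsl]; linarith
  ext a
  simp only [mem_setOf_eq, mem_Ioo]
  -- Eliminating `x` through `8 lam x = s² - lam²` factors the quadratic in `u = 1 - a`.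
  have key : 8 * lam * (lam * (1 + a) - x * (1 - a) ^ 2)
      = (4 * lam - (lam + s) * (1 - a)) * ((s - lam) * (1 - a) + 4 * lam) := by
    linear_combination (1 - a) ^ 2 * hs2
  have hiff (ha : a < 1) : x < lam * (1 + a) / (1 - a) ^ 2 ↔ 1 - 4 * lam / (lam + s) < a := by
    have h1 : 0 < 1 - a := by linarith
    have hq : 0 < (s - lam) * (1 - a) + 4 * lam := by
      have : 0 < (s - lam) * (1 - a) := mul_pos (by linarith) h1
      linarith
    rw [lt_div_iff₀ (by positivity), sub_lt_comm, lt_div_iff₀ hsl, ← sub_pos,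
      ← mul_pos_iff_of_pos_left (show 0 < 8 * lam by positivity), key, mul_pos_iff_of_pos_right hq,
      sub_pos, mul_comm (lam + s)]
  constructor
  · rintro ⟨⟨_, h1⟩, h⟩
    exact ⟨(hiff h1).1 h, h1⟩
  · rintro ⟨h, h1⟩
    exact ⟨⟨by linarith, h1⟩, (hiff h1).2 h⟩

lemma tendsto_sqrt_mul_threshold {lam : ℝ} (hlam : 0 < lam) :
    Tendsto (fun x => √x * threshold lam x) atTop (𝓝 √(2 * lam)) := by
  have h1 : Tendsto (fun x : ℝ => 4 * lam / (lam / √x + √(lam ^ 2 / x + 8 * lam))) atTop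
      (𝓝 (4 * lam / (0 + √(0 + 8 * lam)))) := by
    refine tendsto_const_nhds.div ?_ (by rw [zero_add, zero_add]; positivity)
    refine (tendsto_const_nhds.div_atTop Real.tendsto_sqrt_atTop).add ?_
    exact ((tendsto_const_nhds.div_atTop tendsto_id).add_const _).sqrt
  have h2 : 4 * lam / (0 + √(0 + 8 * lam)) = √(2 * lam) := by
    rw [zero_add, zero_add, show 8 * lam = 2 ^ 2 * (2 * lam) by ring,
      Real.sqrt_mul (by positivity), Real.sqrt_sq (by positivity), div_eq_iff (by positivity)]
    linear_combination -2 * Real.sq_sqrt (show 0 ≤ 2 * lam by positivity)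
  rw [h2] at h1
  refine h1.congr' ?_
  filter_upwards [eventually_gt_atTop 0] with x hx
  have h3 : √(lam ^ 2 + 8 * lam * x) = √x * √(lam ^ 2 / x + 8 * lam) := by
    rw [← Real.sqrt_mul hx.le]
    congr 1
    field_simp
  have h4 : 0 < √x := Real.sqrt_pos.2 hx
  rw [threshold, h3]
  field_simp

lemma integrableOn_weight {β : ℝ} (hβ : -1 < β) {u : ℝ} (hu : 0 < u) :
    IntegrableOn (fun a : ℝ => (1 - a) ^ β) (Ioo (1 - u) 1) := by
  have h := (intervalIntegral.intervalIntegrable_rpow' (a := u) (b := 0) hβ).comp_sub_left 1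
  rw [sub_zero, intervalIntegrable_iff_integrableOn_Ioo_of_le (by linarith)] at h
  exact h

lemma integral_weight {β : ℝ} (hβ : -1 < β) {u : ℝ} (hu : 0 < u) :
    ∫ a in Ioo (1 - u) 1, (1 - a) ^ β = u ^ (1 + β) / (1 + β) := by
  rw [← integral_Ioc_eq_integral_Ioo, ← intervalIntegral.integral_of_le (by linarith),
    intervalIntegral.integral_comp_sub_left (fun y => y ^ β), integral_rpow (Or.inl hβ)]
  rw [sub_self, sub_sub_cancel, Real.zero_rpow (by linarith), sub_zero, add_comm]

/-- The mass that the density `ψ a * (1 - a) ^ β` puts on `(1 - u, 1)`, normalised by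
`u ^ (1 + β)`, converges as `u → 0⁺`. -/
lemma tendsto_mass {β : ℝ} (hβ : -1 < β) {ψ : ℝ → ℝ} {ψ₁ : ℝ} (hmeas : Measurable ψ)
    (hlim : Tendsto ψ (𝓝[Ioo 0 1] 1) (𝓝 ψ₁)) :
    Tendsto (fun u : ℝ => (∫ a in Ioo (1 - u) 1, ψ a * (1 - a) ^ β) / u ^ (1 + β))
      (𝓝[>] 0) (𝓝 (ψ₁ / (1 + β))) := by
  have hb : 0 < 1 + β := by linarith
  rw [Metric.tendsto_nhds]
  intro ε hε
  have hδ : 0 < ε * (1 + β) / 2 := by positivity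
  rw [nhdsWithin_Ioo_eq_nhdsLT one_pos] at hlim
  obtain ⟨l, hl, hball⟩ := mem_nhdsLT_iff_exists_Ioo_subset.1
    (Metric.tendsto_nhds.1 hlim _ hδ)
  have hl : l < 1 := hl
  filter_upwards [Ioo_mem_nhdsGT (show (0 : ℝ) < 1 - l by linarith)] with u hu
  have hu0 : 0 < u := hu.1
  have hup : 0 < u ^ (1 + β) := Real.rpow_pos_of_pos hu0 _
  have hw := integrableOn_weight hβ hu0
  have hbound : ∀ᵐ a ∂(volume.restrict (Ioo (1 - u) 1)),
      ‖(ψ a - ψ₁) * (1 - a) ^ β‖ ≤ ε * (1 + β) / 2 * (1 - a) ^ β := by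
    refine (ae_restrict_iff' measurableSet_Ioo).2 (ae_of_all _ fun a ha => ?_)
    have h0 : 0 ≤ (1 - a) ^ β := Real.rpow_nonneg (by linarith [ha.2]) _
    rw [norm_mul, Real.norm_of_nonneg h0]
    refine mul_le_mul_of_nonneg_right ?_ h0
    have : a ∈ Ioo l 1 := ⟨by linarith [ha.1, hu.2], ha.2⟩
    rw [← dist_eq_norm]
    exact (hball this).le
  have hm : AEStronglyMeasurable (fun a => (ψ a - ψ₁) * (1 - a) ^ β)
      (volume.restrict (Ioo (1 - u) 1)) := by
    refine Measurable.aestronglyMeasurable ?_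
    fun_prop
  have hd : IntegrableOn (fun a => (ψ a - ψ₁) * (1 - a) ^ β) (Ioo (1 - u) 1) :=
    (hw.const_mul _).mono' hm hbound
  have hle := norm_integral_le_of_norm_le (hw.const_mul _) hbound
  rw [integral_const_mul, integral_weight hβ hu0] at hle
  have hsplit : ∫ a in Ioo (1 - u) 1, ψ a * (1 - a) ^ β
      = (∫ a in Ioo (1 - u) 1, (ψ a - ψ₁) * (1 - a) ^ β) + ψ₁ * (u ^ (1 + β) / (1 + β)) := by
    rw [← integral_weight hβ hu0, ← integral_const_mul, ← integral_add hd (hw.const_mul _)]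
    congr 1
    ext a
    ring
  have hdiff : (∫ a in Ioo (1 - u) 1, ψ a * (1 - a) ^ β) / u ^ (1 + β) - ψ₁ / (1 + β)
      = (∫ a in Ioo (1 - u) 1, (ψ a - ψ₁) * (1 - a) ^ β) / u ^ (1 + β) := by
    rw [hsplit]
    field_simp
    ring
  rw [dist_eq_norm, hdiff, norm_div, Real.norm_of_nonneg hup.le, div_lt_iff₀ hup]
  refine hle.trans_lt ?_
  have : ε * (1 + β) / 2 * (u ^ (1 + β) / (1 + β)) = ε * u ^ (1 + β) / 2 := by
    field_simp
  rw [this]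
  linarith [mul_pos hε hup]

theorem stmt_16 (lam β : ℝ) (hlam : 0 < lam) (hβ : β ∈ Set.Ioo (-1 : ℝ) 1)
    (ψ : ℝ → ℝ) (ψ₁ : ℝ) (hψ₁ : 0 < ψ₁)
    (hmeas : Measurable ψ) (hnonneg : ∀ a ∈ Set.Ioo (0 : ℝ) 1, 0 ≤ ψ a)
    (hdens : ∫ a in Set.Ioo (0 : ℝ) 1, ψ a * (1 - a) ^ β = 1)
    (hlim : Filter.Tendsto ψ (nhdsWithin 1 (Set.Ioo (0 : ℝ) 1)) (nhds ψ₁)) :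
    Filter.Tendsto
      (fun x : ℝ =>
        x ^ ((1 + β) / 2) *
          ∫ a in {a ∈ Set.Ioo (0 : ℝ) 1 | x < lam * (1 + a) / (1 - a) ^ 2},
            ψ a * (1 - a) ^ β)
      Filter.atTop
      (nhds (ψ₁ * (2 * lam) ^ ((1 + β) / 2) / (1 + β))) := by
  have hsq := tendsto_sqrt_mul_threshold hlam
  have hU : Tendsto (threshold lam) atTop (𝓝[>] 0) := by
    refine tendsto_nhdsWithin_iff.2 ⟨?_, Eventually.of_forall fun x => threshold_pos hlam x⟩
    refine (hsq.div_atTop Real.tendsto_sqrt_atTop).congr' ?_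
    filter_upwards [eventually_gt_atTop 0] with x hx
    exact mul_div_cancel_left₀ _ (Real.sqrt_pos.2 hx).ne'
  have hsqrt_rpow {y : ℝ} (hy : 0 ≤ y) : √y ^ (1 + β) = y ^ ((1 + β) / 2) := by
    rw [Real.sqrt_eq_rpow, ← Real.rpow_mul hy]
    congr 1
    ring
  have hpow := hsq.rpow_const (p := 1 + β) (Or.inr (by linarith [hβ.1]))
  have hprod := ((tendsto_mass hβ.1 hmeas hlim).comp hU).mul hpow
  rw [hsqrt_rpow (by positivity), div_mul_eq_mul_div] at hprod
  refine hprod.congr' ?_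
  filter_upwards [eventually_gt_atTop lam] with x hx
  have hx0 : 0 < x := hlam.trans hx
  have hUp := Real.rpow_pos_of_pos (threshold_pos hlam x) (1 + β)
  rw [superlevel_eq hlam hx, Function.comp_apply,
    Real.mul_rpow (Real.sqrt_nonneg _) (threshold_pos hlam x).le, hsqrt_rpow hx0.le]
  field_simp
end

section
/- Let λ > 0, β ∈ (0,1), and let ψ : (0,1) → [0,∞) be measurable with ∫₀¹ ψ(a)(1−a)^β da = 1 and ψ(a) → ψ₁ ∈ (0,∞) as a → 1⁻. Let c := λ ∫₀¹ ψ(a)(1−a)^{β−1} da (which is finite since β > 0). Then lim_{x→∞} x^{1+β} ∫_{{a ∈ (0,1) : λ/(1−a) − c > x}} ψ(a)(1−a)^β da = ψ₁ λ^{1+β} / (1+β). -/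
/-!
Only the behaviour of `ψ` near `1` matters. For large `x` the event `x < lam / (1 - a) - c` is the
interval `(1 - t, 1)` with `t = lam / (x + c) → 0⁺`. On that interval `ψ` is uniformly close to
`ψ₁`, so its weighted integral is asymptotic to `ψ₁ * ∫_{1-t}^1 (1-a)^β da = ψ₁ * t^(1+β) / (1+β)`
(`tendsto_tail_div`). Finally `x^(1+β) * t^(1+β) = (lam * x / (x + c))^(1+β) → lam^(1+β)`.
-/

open Filter Topology MeasureTheory Set

/-- The mass of `(1 - a)^β` on `(1 - t, 1)`, together with the integrability that makes the value
meaningful. -/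
lemma integral_tail_rpow {β t : ℝ} (hβ : 0 < β) (ht : 0 < t) :
    IntegrableOn (fun a : ℝ => (1 - a) ^ β) (Ioo (1 - t) 1) ∧
      ∫ a in Ioo (1 - t) 1, (1 - a) ^ β = t ^ (1 + β) / (1 + β) := by
  constructor
  · have hcont : Continuous fun a : ℝ => (1 - a) ^ β :=
      (continuous_const.sub continuous_id).rpow_const fun _ => Or.inr hβ.le
    exact (hcont.integrableOn_Icc (a := 1 - t) (b := 1)).mono_set Ioo_subset_Icc_self
  · rw [← integral_Ioc_eq_integral_Ioo, ← intervalIntegral.integral_of_le (by linarith),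
      intervalIntegral.integral_comp_sub_left (fun u : ℝ => u ^ β) 1,
      integral_rpow (Or.inl (by linarith))]
    rw [sub_self, sub_sub_cancel, Real.zero_rpow (by linarith), sub_zero, add_comm]

/-- The `ψ`-weighted mass of `(1 - t, 1)`, normalised by `t^(1+β)`, converges as `t → 0⁺`. -/
lemma tendsto_tail_div {β : ℝ} (hβ : 0 < β) {ψ : ℝ → ℝ} {ψ₁ : ℝ}
    (hint : IntegrableOn (fun a => ψ a * (1 - a) ^ β) (Ioo 0 1))
    (hlim : Tendsto ψ (𝓝[Ioo 0 1] 1) (𝓝 ψ₁)) :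
    Tendsto (fun t : ℝ => (∫ a in Ioo (1 - t) 1, ψ a * (1 - a) ^ β) / t ^ (1 + β))
      (𝓝[>] 0) (𝓝 (ψ₁ / (1 + β))) := by
  rw [Metric.tendsto_nhds]
  intro ε hε
  have hev : ∀ᶠ a in 𝓝[Ioo 0 1] (1 : ℝ), dist (ψ a) ψ₁ < ε :=
    Metric.tendsto_nhds.1 hlim ε hε
  obtain ⟨δ, hδ, hball⟩ := Metric.mem_nhdsWithin_iff.1 hev
  have hm : 0 < min δ 1 := lt_min hδ one_pos
  filter_upwards [Ioo_mem_nhdsGT hm] with t ht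
  obtain ⟨ht0, htm⟩ := ht
  have htδ : t < δ := htm.trans_le (min_le_left _ _)
  have ht1 : t < 1 := htm.trans_le (min_le_right _ _)
  obtain ⟨hGi, hG⟩ := integral_tail_rpow hβ ht0
  have hFi : IntegrableOn (fun a => ψ a * (1 - a) ^ β) (Ioo (1 - t) 1) :=
    hint.mono_set (Ioo_subset_Ioo_left (by linarith))
  have hpos : 0 < t ^ (1 + β) := Real.rpow_pos_of_pos ht0 _
  have hb : ‖∫ a in Ioo (1 - t) 1, (ψ a * (1 - a) ^ β - ψ₁ * (1 - a) ^ β)‖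
      ≤ ∫ a in Ioo (1 - t) 1, ε * (1 - a) ^ β := by
    refine norm_integral_le_of_norm_le (hGi.const_mul ε) ?_
    refine (ae_restrict_iff' measurableSet_Ioo).2 (Eventually.of_forall fun a ha => ?_)
    have hψ : dist (ψ a) ψ₁ < ε := by
      refine hball ⟨?_, by linarith [ha.1], ha.2⟩
      rw [Metric.mem_ball, Real.dist_eq, abs_lt]
      constructor <;> linarith [ha.1, ha.2]
    have h0 : 0 ≤ (1 - a) ^ β := Real.rpow_nonneg (by linarith [ha.2]) _
    rw [← sub_mul, norm_mul, Real.norm_of_nonneg h0]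
    exact mul_le_mul_of_nonneg_right hψ.le h0
  rw [integral_sub hFi (hGi.const_mul ψ₁), integral_const_mul, integral_const_mul, hG] at hb
  have hp : 0 < 1 + β := by linarith
  have heq : (∫ a in Ioo (1 - t) 1, ψ a * (1 - a) ^ β) / t ^ (1 + β) - ψ₁ / (1 + β)
      = ((∫ a in Ioo (1 - t) 1, ψ a * (1 - a) ^ β) - ψ₁ * (t ^ (1 + β) / (1 + β)))
        / t ^ (1 + β) := by
    field_simp
  rw [Real.dist_eq, heq, abs_div, abs_of_pos hpos, div_lt_iff₀ hpos]
  refine lt_of_le_of_lt hb ?_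
  exact mul_lt_mul_of_pos_left (div_lt_self hpos (by linarith)) hε

theorem stmt_17 (lam β : ℝ) (hlam : 0 < lam) (hβ : β ∈ Set.Ioo (0 : ℝ) 1)
    (ψ : ℝ → ℝ) (ψ₁ : ℝ) (hψ₁ : 0 < ψ₁)
    (hmeas : Measurable ψ) (hnonneg : ∀ a ∈ Set.Ioo (0 : ℝ) 1, 0 ≤ ψ a)
    (hdens : ∫ a in Set.Ioo (0 : ℝ) 1, ψ a * (1 - a) ^ β = 1)
    (hlim : Filter.Tendsto ψ (nhdsWithin 1 (Set.Ioo (0 : ℝ) 1)) (nhds ψ₁))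
    (c : ℝ) (hc : c = lam * ∫ a in Set.Ioo (0 : ℝ) 1, ψ a * (1 - a) ^ (β - 1)) :
    Filter.Tendsto
      (fun x : ℝ =>
        x ^ (1 + β) *
          ∫ a in {a ∈ Set.Ioo (0 : ℝ) 1 | x < lam / (1 - a) - c},
            ψ a * (1 - a) ^ β)
      Filter.atTop
      (nhds (ψ₁ * lam ^ (1 + β) / (1 + β))) := by
  have hβ0 : 0 < β := hβ.1
  -- A non-integrable density would have integral `0`, not `1`.
  have hint : IntegrableOn (fun a => ψ a * (1 - a) ^ β) (Ioo 0 1) := by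
    by_contra h
    rw [integral_undef h] at hdens
    exact zero_ne_one hdens
  have hxc : Tendsto (fun x : ℝ => x + c) atTop atTop := tendsto_atTop_add_const_right _ c tendsto_id
  have ht : Tendsto (fun x : ℝ => lam / (x + c)) atTop (𝓝[>] 0) := by
    refine tendsto_nhdsWithin_iff.2 ⟨tendsto_const_nhds.div_atTop hxc, ?_⟩
    filter_upwards [hxc.eventually_gt_atTop 0] with x hx
    exact div_pos hlam hx
  have hratio : Tendsto (fun x : ℝ => x * (lam / (x + c))) atTop (𝓝 lam) := by
    have h1 : Tendsto (fun x : ℝ => lam - c * (lam / (x + c))) atTop (𝓝 (lam - c * 0)) :=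
      tendsto_const_nhds.sub ((tendsto_const_nhds.div_atTop hxc).const_mul c)
    rw [mul_zero, sub_zero] at h1
    refine h1.congr' ?_
    filter_upwards [hxc.eventually_gt_atTop 0] with x hx
    have hx' : x + c ≠ 0 := hx.ne'
    field_simp
    ring
  have hpow : Tendsto (fun x : ℝ => (x * (lam / (x + c))) ^ (1 + β)) atTop
      (𝓝 (lam ^ (1 + β))) := hratio.rpow_const (Or.inl hlam.ne')
  have hmain := hpow.mul ((tendsto_tail_div hβ0 hint hlim).comp ht)
  rw [show ψ₁ * lam ^ (1 + β) / (1 + β) = lam ^ (1 + β) * (ψ₁ / (1 + β)) by ring]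
  refine hmain.congr' ?_
  filter_upwards [hxc.eventually_gt_atTop 0, hxc.eventually_gt_atTop lam,
    eventually_gt_atTop 0] with x hx hxl hx0
  have ht0 : 0 < lam / (x + c) := div_pos hlam hx
  have ht1 : lam / (x + c) < 1 := (div_lt_one hx).2 hxl
  have hset : {a ∈ Ioo (0 : ℝ) 1 | x < lam / (1 - a) - c} = Ioo (1 - lam / (x + c)) 1 := by
    ext a
    have hiff : a < 1 → (x < lam / (1 - a) - c ↔ 1 - lam / (x + c) < a) := fun ha => by
      rw [lt_sub_iff_add_lt, lt_div_comm₀ hx (sub_pos.2 ha)]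
      constructor <;> intro h <;> linarith
    constructor
    · rintro ⟨⟨_, h1⟩, h2⟩
      exact ⟨(hiff h1).1 h2, h1⟩
    · rintro ⟨h0, h1⟩
      exact ⟨⟨by linarith, h1⟩, (hiff h1).2 h0⟩
  have hpos : 0 < (lam / (x + c)) ^ (1 + β) := Real.rpow_pos_of_pos ht0 _
  rw [hset, Function.comp_apply, Real.mul_rpow hx0.le ht0.le, mul_assoc,
    mul_div_cancel₀ _ hpos.ne']
end
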